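/- Let (C, Δ₀, α, R) be a Hom-coassociative Rota-Baxter coalgebra of weight −1 over a field of characteristic 0. Define Δ = (R⊗I)∘Δ₀ − τ∘(I⊗R)∘Δ₀ − Δ₀, where τ is the flip of C⊗C and I the identity. Then (C, Δ, α) is a Hom-preLie coalgebra. -/

import Mathlib

open TensorProduct

noncomputable section

variable {F : Type*} [Field F] [CharZero F]
variable {C : Type*} [AddCommGroup C] [Module F C]

/-- The flip `τ : x ⊗ y ↦ y ⊗ x` on `C ⊗ C`. -/
def tw : C ⊗[F] C →ₗ[F] C ⊗[F] C := (TensorProduct.comm F C C).toLinearMap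

/-- `(f ⊗ g)` (followed by the associator), for `f : C → C ⊗ C`, `g : C → C`. -/
def rT (f : C →ₗ[F] C ⊗[F] C) (g : C →ₗ[F] C) :
    C ⊗[F] C →ₗ[F] C ⊗[F] (C ⊗[F] C) :=
  (TensorProduct.assoc F C C C).toLinearMap ∘ₗ TensorProduct.map f g

/-- `(g ⊗ f)` for `g : C → C`, `f : C → C ⊗ C`. -/
def lT (g : C →ₗ[F] C) (f : C →ₗ[F] C ⊗[F] C) :
    C ⊗[F] C →ₗ[F] C ⊗[F] (C ⊗[F] C) :=
  TensorProduct.map g f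

/-- `τ ⊗ I` acting on `C ⊗ (C ⊗ C)` (swap of the first two factors). -/
def sw12 : C ⊗[F] (C ⊗[F] C) →ₗ[F] C ⊗[F] (C ⊗[F] C) :=
  (TensorProduct.assoc F C C C).toLinearMap ∘ₗ
    TensorProduct.map (tw : C ⊗[F] C →ₗ[F] C ⊗[F] C) (LinearMap.id : C →ₗ[F] C) ∘ₗ
    (TensorProduct.assoc F C C C).symm.toLinearMap

/-- The cyclic permutation `ξ : x ⊗ y ⊗ z ↦ y ⊗ z ⊗ x` on `C ⊗ (C ⊗ C)`. -/
def cyc : C ⊗[F] (C ⊗[F] C) →ₗ[F] C ⊗[F] (C ⊗[F] C) :=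
  TensorProduct.map (LinearMap.id : C →ₗ[F] C) (tw : C ⊗[F] C →ₗ[F] C ⊗[F] C) ∘ₗ sw12

/-- Rota-Baxter axioms of weight `lam` on a Hom-coassociative coalgebra `(C, Δ0, α)`. -/
def IsHomCoassociativeRotaBaxter (Δ0 : C →ₗ[F] C ⊗[F] C) (α R : C →ₗ[F] C) (lam : F) : Prop :=
  (lT α Δ0 ∘ₗ Δ0 = rT Δ0 α ∘ₗ Δ0) ∧
  (R ∘ₗ α = α ∘ₗ R) ∧
  (TensorProduct.map R R ∘ₗ Δ0 =
    (TensorProduct.map R (LinearMap.id : C →ₗ[F] C) ∘ₗ Δ0 +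
     TensorProduct.map (LinearMap.id : C →ₗ[F] C) R ∘ₗ Δ0 + lam • Δ0) ∘ₗ R)

/-- Hom-preLie coalgebra axiom for `(C, Δ, α)`. -/
def IsHomPreLieCoalgebra (Δ : C →ₗ[F] C ⊗[F] C) (α : C →ₗ[F] C) : Prop :=
  rT Δ α ∘ₗ Δ - lT α Δ ∘ₗ Δ = sw12 ∘ₗ (rT Δ α ∘ₗ Δ - lT α Δ ∘ₗ Δ)

/-!
Dualise. For a commutative algebra `A`, the comultiplication `Δ₀` turns the linear maps `C → A`
into a Hom-associative Rota-Baxter algebra under convolution. There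
`f ▷ h = (R f + λ f) * h - h * R f`, and both `R` and `R + λ` carry the bracket `f ▷ g - g ▷ f` to
the commutator of `*`. Left multiplications by `R f + λ f` commute with right multiplications by
`R g` up to the twist, so `f ↦ f ▷ ·` represents this bracket, which is the Hom-preLie identity.

The identity descends to `C` because three maps `C → A` can be chosen so that multiplying their
values embeds `C ⊗ C ⊗ C` in `A`: take `A = E ⊗ E ⊗ E`, where `E = k ⊕ C` is the trivial square-zero
extension, and embed `C` in each of the three factors. Unlike duality with scalar-valued
functionals, this works over every commutative ring.
-/

section HomAlgebra

variable {k D : Type*} [CommRing k] [AddCommGroup D] [Module k D]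

/-- The associator of the product `μ` twisted by `a`: it vanishes when `(D, μ, a)` is
Hom-associative, and `(D, μ, a)` is Hom-preLie when it is symmetric in its first two arguments. -/
def homAssociator (μ : D →ₗ[k] D →ₗ[k] D) (a : D →ₗ[k] D) (f g h : D) : D :=
  μ (μ f g) (a h) - μ (a f) (μ g h)

/-- The product `f ▷ g = (r f + lam f) * g - g * r f` which a Rota-Baxter operator `r` of weight
`lam` produces from the product `μ`. -/
def rotaBaxterPreLieMul (μ : D →ₗ[k] D →ₗ[k] D) (r : D →ₗ[k] D) (lam : k) :
    D →ₗ[k] D →ₗ[k] D :=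
  μ ∘ₗ (r + lam • LinearMap.id) - μ.flip ∘ₗ r

variable {μ : D →ₗ[k] D →ₗ[k] D} {a r : D →ₗ[k] D} {lam : k}

theorem rotaBaxterPreLieMul_apply (f g : D) :
    rotaBaxterPreLieMul μ r lam f g = μ (r f + lam • f) g - μ g (r f) := rfl

theorem map_rotaBaxterPreLieMul_sub_swap
    (hr : ∀ f g, μ (r f) (r g) = r (μ (r f) g + μ f (r g) + lam • μ f g)) (f g : D) :
    r (rotaBaxterPreLieMul μ r lam f g - rotaBaxterPreLieMul μ r lam g f) =
      μ (r f) (r g) - μ (r g) (r f) := by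
  rw [hr, hr, ← map_sub]
  congr 1
  simp only [rotaBaxterPreLieMul_apply, map_add, map_smul, LinearMap.add_apply,
    LinearMap.smul_apply]
  abel

theorem map_add_smul_rotaBaxterPreLieMul_sub_swap
    (hr : ∀ f g, μ (r f) (r g) = r (μ (r f) g + μ f (r g) + lam • μ f g)) (f g : D) :
    r (rotaBaxterPreLieMul μ r lam f g - rotaBaxterPreLieMul μ r lam g f) +
        lam • (rotaBaxterPreLieMul μ r lam f g - rotaBaxterPreLieMul μ r lam g f) =
      μ (r f + lam • f) (r g + lam • g) - μ (r g + lam • g) (r f + lam • f) := by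
  rw [map_rotaBaxterPreLieMul_sub_swap hr]
  simp only [rotaBaxterPreLieMul_apply, map_add, map_smul, LinearMap.add_apply,
    LinearMap.smul_apply]
  module

theorem homAssociator_rotaBaxterPreLieMul_left_comm
    (hμ : ∀ f g h, homAssociator μ a f g h = 0) (hra : ∀ f, r (a f) = a (r f))
    (hr : ∀ f g, μ (r f) (r g) = r (μ (r f) g + μ f (r g) + lam • μ f g)) (f g h : D) :
    homAssociator (rotaBaxterPreLieMul μ r lam) a f g h =
      homAssociator (rotaBaxterPreLieMul μ r lam) a g f h := by
  set s := rotaBaxterPreLieMul μ r lam with hs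
  have mul_assoc_twisted (x y z : D) : μ (a x) (μ y z) = μ (μ x y) (a z) :=
    (sub_eq_zero.mp (hμ x y z)).symm
  have twist_add_smul (x : D) : r (a x) + lam • a x = a (r x + lam • x) := by
    rw [hra, map_add, map_smul]
  have bracket_action : s (s f g - s g f) (a h) = s (a f) (s g h) - s (a g) (s f h) := by
    rw [hs, rotaBaxterPreLieMul_apply (_ - _), map_add_smul_rotaBaxterPreLieMul_sub_swap hr,
      map_rotaBaxterPreLieMul_sub_swap hr]
    simp only [rotaBaxterPreLieMul_apply, twist_add_smul]
    simp only [hra, map_sub, LinearMap.sub_apply, mul_assoc_twisted]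
    abel
  rw [map_sub, LinearMap.sub_apply] at bracket_action
  exact sub_eq_sub_iff_sub_eq_sub.mpr bracket_action

end HomAlgebra

section TripleProduct

universe u v

variable {k M N P A : Type*} [CommRing k] [AddCommGroup M] [Module k M] [AddCommGroup N]
  [Module k N] [AddCommGroup P] [Module k P] [CommRing A] [Algebra k A]

/-- The linear map `x ⊗ y ⊗ z ↦ f x * (g y * h z)`, which tests a threefold tensor against three
algebra-valued maps. -/
def tripleProduct (f : M →ₗ[k] A) (g : N →ₗ[k] A) (h : P →ₗ[k] A) :
    M ⊗[k] (N ⊗[k] P) →ₗ[k] A :=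
  LinearMap.mul' k A ∘ₗ map f (LinearMap.mul' k A ∘ₗ map g h)

theorem tripleProduct_leftComm (f : M →ₗ[k] A) (g : N →ₗ[k] A) (h : P →ₗ[k] A)
    (t : N ⊗[k] (M ⊗[k] P)) :
    tripleProduct f g h (TensorProduct.leftComm k N M P t) = tripleProduct g f h t := by
  suffices tripleProduct f g h ∘ₗ (TensorProduct.leftComm k N M P).toLinearMap =
      tripleProduct g f h from LinearMap.congr_fun this t
  ext x y z
  simp [tripleProduct, mul_left_comm]

theorem tripleProduct_comp_assoc (f : M →ₗ[k] A) (g : N →ₗ[k] A) (h : P →ₗ[k] A) :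
    tripleProduct f g h ∘ₗ (TensorProduct.assoc k M N P).toLinearMap =
      LinearMap.mul' k A ∘ₗ map (LinearMap.mul' k A ∘ₗ map f g) h := by
  ext x y z
  simp [tripleProduct, mul_assoc]

theorem tripleProduct_includes_injective {i : M →ₗ[k] A} {p : A →ₗ[k] M}
    (hpi : p ∘ₗ i = LinearMap.id) :
    Function.Injective (tripleProduct (A := A ⊗[k] (A ⊗[k] A))
      ((TensorProduct.mk k A (A ⊗[k] A)).flip 1 ∘ₗ i)
      (TensorProduct.mk k A (A ⊗[k] A) 1 ∘ₗ (TensorProduct.mk k A A).flip 1 ∘ₗ i)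
      (TensorProduct.mk k A (A ⊗[k] A) 1 ∘ₗ TensorProduct.mk k A A 1 ∘ₗ i)) := by
  have p_i (x : M) : p (i x) = x := LinearMap.congr_fun hpi x
  suffices retraction : map p (map p p) ∘ₗ tripleProduct (A := A ⊗[k] (A ⊗[k] A)) _ _ _ =
      LinearMap.id from Function.LeftInverse.injective (LinearMap.congr_fun retraction)
  ext x y z
  simp [tripleProduct, p_i]

theorem exists_injective_tripleProduct (k : Type u) (M : Type v) [CommRing k] [AddCommGroup M]
    [Module k M] :
    ∃ (A : Type (max u v)) (_ : CommRing A) (_ : Algebra k A) (f g h : M →ₗ[k] A),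
      Function.Injective (tripleProduct f g h) := by
  -- The product of `TrivSqZeroExt k M` is defined through both a left and a right action of `k`.
  let : Module kᵐᵒᵖ M := Module.compHom M ((RingHom.id k).fromOpposite mul_comm)
  have : IsCentralScalar k M := ⟨fun _ _ => rfl⟩
  have snd_inr : TrivSqZeroExt.sndHom k M ∘ₗ TrivSqZeroExt.inrHom k M = LinearMap.id := rfl
  exact ⟨_, _, _, _, _, _, tripleProduct_includes_injective snd_inr⟩

end TripleProduct

section HomCoalgebra

variable {k M A : Type*} [CommRing k] [AddCommGroup M] [Module k M] [CommRing A] [Algebra k A]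

/-- The coassociator of the comultiplication `Δ` twisted by `α`: it vanishes when `(M, Δ, α)` is
Hom-coassociative, and `(M, Δ, α)` is Hom-preLie when it is invariant under the exchange of the
first two tensor factors. -/
def homCoassociator (Δ : M →ₗ[k] M ⊗[k] M) (α : M →ₗ[k] M) : M →ₗ[k] M ⊗[k] (M ⊗[k] M) :=
  (TensorProduct.assoc k M M M).toLinearMap ∘ₗ map Δ α ∘ₗ Δ - map α Δ ∘ₗ Δ

/-- The comultiplication `(R ⊗ I) ∘ Δ - τ ∘ (I ⊗ R) ∘ Δ + lam Δ` which a Rota-Baxter operator `R` of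
weight `lam` produces from `Δ`. -/
def rotaBaxterPreLieComul (Δ : M →ₗ[k] M ⊗[k] M) (R : M →ₗ[k] M) (lam : k) :
    M →ₗ[k] M ⊗[k] M :=
  map R LinearMap.id ∘ₗ Δ -
    (TensorProduct.comm k M M).toLinearMap ∘ₗ map LinearMap.id R ∘ₗ Δ + lam • Δ

variable (A) in
/-- The convolution product on `A`-valued linear maps dual to `Δ`. It takes `Δ` as an argument,
instead of using the `CoalgebraStruct`-based `WithConv`, because two comultiplications on `M` are
compared. -/
def convolution (Δ : M →ₗ[k] M ⊗[k] M) :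
    (M →ₗ[k] A) →ₗ[k] (M →ₗ[k] A) →ₗ[k] (M →ₗ[k] A) :=
  LinearMap.mk₂ k (fun f g => LinearMap.mul' k A ∘ₗ map f g ∘ₗ Δ)
    (fun f f' g => by rw [map_add_left, LinearMap.add_comp, LinearMap.comp_add])
    (fun c f g => by rw [map_smul_left, LinearMap.smul_comp, LinearMap.comp_smul])
    (fun f g g' => by rw [map_add_right, LinearMap.add_comp, LinearMap.comp_add])
    (fun c f g => by rw [map_smul_right, LinearMap.smul_comp, LinearMap.comp_smul])

theorem convolution_apply (Δ : M →ₗ[k] M ⊗[k] M) (f g : M →ₗ[k] A) :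
    convolution A Δ f g = LinearMap.mul' k A ∘ₗ map f g ∘ₗ Δ := rfl

theorem convolution_map_comp (Δ : M →ₗ[k] M ⊗[k] M) (S T : M →ₗ[k] M) (f g : M →ₗ[k] A) :
    convolution A (map S T ∘ₗ Δ) f g = convolution A Δ (f ∘ₗ S) (g ∘ₗ T) := by
  simp only [convolution_apply, map_comp, LinearMap.comp_assoc]

theorem convolution_comm_comp (Δ : M →ₗ[k] M ⊗[k] M) (f g : M →ₗ[k] A) :
    convolution A ((TensorProduct.comm k M M).toLinearMap ∘ₗ Δ) f g = convolution A Δ g f := by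
  have mul_map_comm : (LinearMap.mul' k A ∘ₗ map f g) ∘ₗ (TensorProduct.comm k M M).toLinearMap =
      LinearMap.mul' k A ∘ₗ map g f := by
    ext x y
    simp [mul_comm]
  simp only [convolution_apply, ← LinearMap.comp_assoc, mul_map_comm]

theorem convolution_rotaBaxterPreLieComul (Δ : M →ₗ[k] M ⊗[k] M) (R : M →ₗ[k] M) (lam : k) :
    convolution A (rotaBaxterPreLieComul Δ R lam) =
      rotaBaxterPreLieMul (convolution A Δ) (LinearMap.lcomp k A R) lam := by
  ext1 f
  ext1 g
  calc convolution A (rotaBaxterPreLieComul Δ R lam) f g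
      = convolution A (map R LinearMap.id ∘ₗ Δ) f g -
          convolution A ((TensorProduct.comm k M M).toLinearMap ∘ₗ map LinearMap.id R ∘ₗ Δ) f g +
          lam • convolution A Δ f g := by
        simp only [convolution_apply, rotaBaxterPreLieComul, LinearMap.comp_add,
          LinearMap.comp_sub, LinearMap.comp_smul]
    _ = convolution A Δ (f ∘ₗ R) g - convolution A Δ g (f ∘ₗ R) + lam • convolution A Δ f g := by
        simp only [convolution_comm_comp, convolution_map_comp, LinearMap.comp_id]
    _ = rotaBaxterPreLieMul (convolution A Δ) (LinearMap.lcomp k A R) lam f g := by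
        simp only [rotaBaxterPreLieMul_apply, LinearMap.lcomp_apply', map_add, map_smul,
          LinearMap.add_apply, LinearMap.smul_apply]
        abel

theorem convolution_rotaBaxter {Δ : M →ₗ[k] M ⊗[k] M} {R : M →ₗ[k] M} {lam : k}
    (hR : map R R ∘ₗ Δ =
      (map R LinearMap.id ∘ₗ Δ + map LinearMap.id R ∘ₗ Δ + lam • Δ) ∘ₗ R) (f g : M →ₗ[k] A) :
    convolution A Δ (f ∘ₗ R) (g ∘ₗ R) =
      (convolution A Δ (f ∘ₗ R) g + convolution A Δ f (g ∘ₗ R) + lam • convolution A Δ f g) ∘ₗ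
        R := by
  calc convolution A Δ (f ∘ₗ R) (g ∘ₗ R)
      = convolution A (map R R ∘ₗ Δ) f g := (convolution_map_comp Δ R R f g).symm
    _ = (convolution A (map R LinearMap.id ∘ₗ Δ) f g +
          convolution A (map LinearMap.id R ∘ₗ Δ) f g + lam • convolution A Δ f g) ∘ₗ R := by
        simp only [hR, convolution_apply, LinearMap.comp_add, LinearMap.add_comp,
          LinearMap.comp_smul, LinearMap.smul_comp, LinearMap.comp_assoc]
    _ = _ := by simp only [convolution_map_comp, LinearMap.comp_id]

theorem tripleProduct_comp_homCoassociator (Δ : M →ₗ[k] M ⊗[k] M) (α : M →ₗ[k] M)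
    (f g h : M →ₗ[k] A) :
    tripleProduct f g h ∘ₗ homCoassociator Δ α =
      homAssociator (convolution A Δ) (LinearMap.lcomp k A α) f g h := by
  have left_nested : tripleProduct f g h ∘ₗ
      (TensorProduct.assoc k M M M).toLinearMap ∘ₗ map Δ α ∘ₗ Δ =
        convolution A Δ (convolution A Δ f g) (h ∘ₗ α) := by
    rw [← LinearMap.comp_assoc, tripleProduct_comp_assoc]
    simp only [convolution_apply, map_comp, ← LinearMap.comp_assoc]
  have right_nested : tripleProduct f g h ∘ₗ map α Δ ∘ₗ Δ =
      convolution A Δ (f ∘ₗ α) (convolution A Δ g h) := by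
    simp only [tripleProduct, convolution_apply, map_comp, ← LinearMap.comp_assoc]
  rw [homCoassociator, LinearMap.comp_sub, left_nested, right_nested]
  rfl

variable {Δ₀ : M →ₗ[k] M ⊗[k] M} {α R : M →ₗ[k] M} {lam : k}

theorem tripleProduct_comp_homCoassociator_rotaBaxterPreLieComul_left_comm
    (hΔ₀ : homCoassociator Δ₀ α = 0) (hRα : R ∘ₗ α = α ∘ₗ R)
    (hR : map R R ∘ₗ Δ₀ =
      (map R LinearMap.id ∘ₗ Δ₀ + map LinearMap.id R ∘ₗ Δ₀ + lam • Δ₀) ∘ₗ R)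
    (f g h : M →ₗ[k] A) :
    tripleProduct f g h ∘ₗ homCoassociator (rotaBaxterPreLieComul Δ₀ R lam) α =
      tripleProduct g f h ∘ₗ homCoassociator (rotaBaxterPreLieComul Δ₀ R lam) α := by
  have convolution_homAssoc (f g h : M →ₗ[k] A) :
      homAssociator (convolution A Δ₀) (LinearMap.lcomp k A α) f g h = 0 := by
    rw [← tripleProduct_comp_homCoassociator, hΔ₀, LinearMap.comp_zero]
  have precomp_comm (f : M →ₗ[k] A) : LinearMap.lcomp k A R (LinearMap.lcomp k A α f) =
      LinearMap.lcomp k A α (LinearMap.lcomp k A R f) := by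
    simp only [LinearMap.lcomp_apply', LinearMap.comp_assoc, hRα]
  simp only [tripleProduct_comp_homCoassociator, convolution_rotaBaxterPreLieComul]
  exact homAssociator_rotaBaxterPreLieMul_left_comm convolution_homAssoc precomp_comm
    (convolution_rotaBaxter hR) f g h

theorem rotaBaxterWeightNegOne_homPreLieCoalgebra_general
    (hΔ₀ : homCoassociator Δ₀ α = 0) (hRα : R ∘ₗ α = α ∘ₗ R)
    (hR : map R R ∘ₗ Δ₀ =
      (map R LinearMap.id ∘ₗ Δ₀ + map LinearMap.id R ∘ₗ Δ₀ + lam • Δ₀) ∘ₗ R) :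
    homCoassociator (rotaBaxterPreLieComul Δ₀ R lam) α =
      (TensorProduct.leftComm k M M M).toLinearMap ∘ₗ
        homCoassociator (rotaBaxterPreLieComul Δ₀ R lam) α := by
  obtain ⟨A, _, _, f, g, h, tripleProduct_injective⟩ := exists_injective_tripleProduct k M
  ext1 x
  apply tripleProduct_injective
  rw [LinearMap.comp_apply, LinearEquiv.coe_coe, tripleProduct_leftComm]
  exact LinearMap.congr_fun
    (tripleProduct_comp_homCoassociator_rotaBaxterPreLieComul_left_comm hΔ₀ hRα hR f g h) x

end HomCoalgebra

section FieldCoefficients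

variable {K V : Type*} [Field K] [AddCommGroup V] [Module K V]

theorem sw12_eq_leftComm :
    (sw12 : V ⊗[K] (V ⊗[K] V) →ₗ[K] V ⊗[K] (V ⊗[K] V)) =
      (TensorProduct.leftComm K V V V).toLinearMap := by
  ext x y z
  simp [sw12, tw]

theorem isHomPreLieCoalgebra_iff {Δ : V →ₗ[K] V ⊗[K] V} {α : V →ₗ[K] V} :
    IsHomPreLieCoalgebra Δ α ↔ homCoassociator Δ α =
      (TensorProduct.leftComm K V V V).toLinearMap ∘ₗ homCoassociator Δ α := by
  rw [← sw12_eq_leftComm]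
  rfl

theorem rotaBaxterPreLieComul_neg_one (Δ₀ : V →ₗ[K] V ⊗[K] V) (R : V →ₗ[K] V) :
    rotaBaxterPreLieComul Δ₀ R (-1 : K) =
      map R LinearMap.id ∘ₗ Δ₀ - tw ∘ₗ (map LinearMap.id R ∘ₗ Δ₀) - Δ₀ := by
  rw [rotaBaxterPreLieComul, neg_one_smul K Δ₀, ← sub_eq_add_neg]
  rfl

end FieldCoefficients

/-- A Hom-coassociative Rota-Baxter coalgebra of weight `-1` gives a Hom-preLie
coalgebra via `Δ = (R ⊗ I) ∘ Δ₀ - τ ∘ (I ⊗ R) ∘ Δ₀ - Δ₀`. -/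
theorem rotaBaxterWeightNegOne_homPreLieCoalgebra
    (Δ0 : C →ₗ[F] C ⊗[F] C) (α R : C →ₗ[F] C)
    (h : IsHomCoassociativeRotaBaxter Δ0 α R (-1 : F)) :
    IsHomPreLieCoalgebra
      (TensorProduct.map R (LinearMap.id : C →ₗ[F] C) ∘ₗ Δ0 -
        tw ∘ₗ (TensorProduct.map (LinearMap.id : C →ₗ[F] C) R ∘ₗ Δ0) - Δ0) α := by
  rw [← rotaBaxterPreLieComul_neg_one, isHomPreLieCoalgebra_iff]
  exact rotaBaxterWeightNegOne_homPreLieCoalgebra_general (sub_eq_zero.mpr h.1.symm) h.2.1 h.2.2
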